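/- arXiv:2605.06689 — 13 statements merged into one kernel-verified Lean document; each statement's English description precedes it below -/
import Mathlib

section
/- For all integers n ≥ 2 and 2 ≤ k ≤ n with both k and n even, T(n,k) = (2/k) · T(n,k-1). -/
/-!
Write `k = 2p + 2` and `N = 2p + 1`. After clearing factorials the claim is `S = 2 S'` for the two
alternating sums `S` (over the row `N + 1` of Pascal's triangle, centred at `p + 1`) and `S'` (over
the row `N`, centred at `p`). Pascal's rule (`sum_choose_succ_alternating`) splits `S` into two
sums over the row `N`: one is `S'`, centred at `p`, the other is centred at `p + 1`. As `N` is odd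
and `n` is even, the reflection `i ↦ N - i` carries the second sum into the first
(`sum_choose_reflect`).
-/

open Finset

/-- Normalized flickering central finite difference `T(n,k)` (OEIS A395021),
`T(n,k) = (1/k!) · Σ_{i=0}^{k} (-1)^{k-i} C(k,i) (i - ⌊k/2⌋)^n`. -/
def flickT (n k : ℕ) : ℚ :=
  (1 / (Nat.factorial k : ℚ)) *
    ∑ i ∈ Finset.range (k + 1),
      (-1 : ℚ) ^ (k - i) * (Nat.choose k i : ℚ) * ((i : ℚ) - ((k / 2 : ℕ) : ℚ)) ^ n

/-- Pascal's rule for alternating binomial sums. -/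
lemma sum_choose_succ_alternating (N : ℕ) (f : ℕ → ℚ) :
    ∑ i ∈ Finset.range (N + 2), (-1 : ℚ) ^ i * (Nat.choose (N + 1) i : ℚ) * f i =
      ∑ i ∈ Finset.range (N + 1), (-1 : ℚ) ^ i * (Nat.choose N i : ℚ) * f i -
        ∑ i ∈ Finset.range (N + 1), (-1 : ℚ) ^ i * (Nat.choose N i : ℚ) * f (i + 1) := by
  -- The first sum on the right is extended by a vanishing term, then stripped of its term at `0`.
  have h : ∑ i ∈ Finset.range (N + 1), (-1 : ℚ) ^ i * (Nat.choose N i : ℚ) * f i =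
      ∑ i ∈ Finset.range (N + 2), (-1 : ℚ) ^ i * (Nat.choose N i : ℚ) * f i := by
    rw [Finset.sum_range_succ _ (N + 1)]
    simp
  rw [h, Finset.sum_range_succ' _ (N + 1), Finset.sum_range_succ' _ (N + 1),
    add_sub_right_comm, ← Finset.sum_sub_distrib]
  congr 1
  · refine Finset.sum_congr rfl fun i _ => ?_
    rw [Nat.choose_succ_succ']
    push_cast
    ring
  · simp

lemma neg_one_pow_sub {N i : ℕ} (h : i ≤ N) : (-1 : ℚ) ^ (N - i) = (-1) ^ N * (-1) ^ i := by
  obtain ⟨d, rfl⟩ := Nat.exists_eq_add_of_le h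
  rw [Nat.add_sub_cancel_left, pow_add, mul_right_comm, ← pow_add, Even.neg_one_pow ⟨i, rfl⟩,
    one_mul]

/-- The reflection `i ↦ 2p + 1 - i` exchanges the centres `p` and `p + 1`; the sign `-1` comes from
the odd length of the row. -/
lemma sum_choose_reflect (n p : ℕ) (hne : Even n) :
    ∑ i ∈ Finset.range (2 * p + 2),
        (-1 : ℚ) ^ i * (Nat.choose (2 * p + 1) i : ℚ) * ((i : ℚ) - (p + 1)) ^ n =
      -∑ i ∈ Finset.range (2 * p + 2),
        (-1 : ℚ) ^ i * (Nat.choose (2 * p + 1) i : ℚ) * ((i : ℚ) - p) ^ n := by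
  rw [← Finset.sum_range_reflect, ← Finset.sum_neg_distrib]
  refine Finset.sum_congr rfl fun i hi => ?_
  have hi' : i ≤ 2 * p + 1 := by have := Finset.mem_range.mp hi; omega
  rw [show 2 * p + 2 - 1 - i = 2 * p + 1 - i by omega, Nat.choose_symm hi', Nat.cast_sub hi',
    ← hne.neg_pow ((i : ℚ) - p)]
  rw [neg_one_pow_sub hi', Odd.neg_one_pow ⟨p, rfl⟩]
  push_cast
  ring

/-- `flickT` with the sign `(-1) ^ k` pulled out, which leaves no truncated subtraction. -/
lemma flickT_eq (n k : ℕ) :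
    flickT n k = (-1) ^ k / (Nat.factorial k : ℚ) * ∑ i ∈ Finset.range (k + 1),
      (-1 : ℚ) ^ i * (Nat.choose k i : ℚ) * ((i : ℚ) - ((k / 2 : ℕ) : ℚ)) ^ n := by
  rw [flickT, Finset.mul_sum, Finset.mul_sum]
  refine Finset.sum_congr rfl fun i hi => ?_
  rw [neg_one_pow_sub (Finset.mem_range_succ_iff.mp hi)]
  ring

/-- For all integers `n ≥ 2` and `2 ≤ k ≤ n` with both `k` and `n` even,
`T(n,k) = (2/k) · T(n,k-1)`. -/
theorem flickT_even_even (n k : ℕ) (hn : 2 ≤ n) (hk : 2 ≤ k) (hkn : k ≤ n)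
    (hke : Even k) (hne : Even n) :
    flickT n k = (2 / (k : ℚ)) * flickT n (k - 1) := by
  obtain ⟨p, rfl⟩ : ∃ p, k = 2 * p + 1 + 1 := by
    obtain ⟨m, rfl⟩ := hke
    exact ⟨m - 1, by omega⟩
  rw [Nat.add_sub_cancel, flickT_eq, flickT_eq, sum_choose_succ_alternating,
    show (2 * p + 1 + 1) / 2 = p + 1 by omega, show (2 * p + 1) / 2 = p by omega,
    Odd.neg_one_pow ⟨p, rfl⟩, Even.neg_one_pow ⟨p + 1, by ring⟩, Nat.factorial_succ (2 * p + 1)]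
  push_cast
  rw [sum_choose_reflect n p hne]
  simp only [add_sub_add_right_eq_sub]
  have hf : ((2 * p + 1).factorial : ℚ) ≠ 0 := by positivity
  have hp : (2 * p + 1 + 1 : ℚ) ≠ 0 := by positivity
  field_simp
  ring
end

section
/- For all integers n ≥ 2 and 1 ≤ k ≤ n-1 with k odd and n even, T(n,k) = ((k+1)/2) · T(n-1,k). -/
/-!
Write `k = 2m + 1`. Then `⌊k/2⌋ = m`, `(k + 1)/2 = m + 1`, and `T(n,k) - (m + 1) T(n-1,k)` is,
up to the factor `1/k!`, the sum over `i` of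
`(-1)^(k-i) C(k,i) (i - m)^(n-1) (i - m - (m + 1))`. Since `C(k,i) (k - i) = k C(2m,i)`, this is
`-k` times the sum over `0 ≤ i ≤ 2m` of `(-1)^(k-i) C(2m,i) (i - m)^(n-1)`. Under the reflection
`i ↦ 2m - i` the sign and the binomial coefficient are invariant, while `(i - m)^(n-1)` changes
sign because `n - 1` is odd. Hence the sum vanishes.
-/

open Finset

/-- An odd power of the offset `i - m` from the centre, summed against the symmetric weights
`(-1)^(2m+1-i) C(2m,i)`, gives zero. -/
lemma sum_centered_odd_pow (m p : ℕ) (hp : Odd p) :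
    ∑ i ∈ Finset.range (2 * m + 1),
      (-1 : ℚ) ^ (2 * m + 1 - i) * (Nat.choose (2 * m) i : ℚ) * ((i : ℚ) - m) ^ p = 0 := by
  rw [← self_eq_neg, ← Finset.sum_neg_distrib]
  conv_lhs => rw [← Finset.sum_range_reflect]
  refine Finset.sum_congr rfl fun i hi => ?_
  obtain ⟨j, hj⟩ : ∃ j, 2 * m = i + j :=
    Nat.exists_eq_add_of_le (Nat.lt_succ_iff.mp (Finset.mem_range.mp hi))
  have hj' : 2 * m + 1 - 1 - i = j := by omega
  have e1 : 2 * m + 1 - j = i + 1 := by omega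
  have e2 : 2 * m + 1 - i = j + 1 := by omega
  have hsign : (-1 : ℚ) ^ (i + 1) = (-1) ^ (j + 1) :=
    neg_one_pow_congr (by simp only [Nat.even_iff]; omega)
  have hchoose : (2 * m).choose j = (2 * m).choose i :=
    (Nat.choose_symm_of_eq_add hj).symm
  have hq : (2 : ℚ) * m = i + j := by exact_mod_cast hj
  have hx : (j : ℚ) - m = -((i : ℚ) - m) := by linarith
  rw [hj', e1, e2, hsign, hchoose, hx, hp.neg_pow]
  ring

/-- For all integers `n ≥ 2` and `1 ≤ k ≤ n-1` with `k` odd and `n` even,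
`T(n,k) = ((k+1)/2) · T(n-1,k)`. -/
theorem flickT_odd_even (n k : ℕ) (hn : 2 ≤ n) (hk : 1 ≤ k) (hkn : k ≤ n - 1)
    (hko : Odd k) (hne : Even n) :
    flickT n k = (((k : ℚ) + 1) / 2) * flickT (n - 1) k := by
  obtain ⟨m, rfl⟩ := hko
  obtain ⟨p, rfl⟩ : ∃ p, n = p + 1 := ⟨n - 1, by omega⟩
  have hp : Odd p := by
    rw [Nat.even_iff] at hne
    rw [Nat.odd_iff]
    omega
  have hfloor : (2 * m + 1) / 2 = m := by omega
  have hhalf : (((2 * m + 1 : ℕ) : ℚ) + 1) / 2 = m + 1 := by push_cast; ring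
  unfold flickT
  rw [Nat.add_sub_cancel, hfloor, hhalf, mul_left_comm]
  congr 1
  rw [← sub_eq_zero, Finset.mul_sum, ← Finset.sum_sub_distrib, Finset.sum_range_succ]
  -- The term `i = k` carries the factor `k - m - (m + 1) = 0`.
  have hlast : (((2 * m + 1 : ℕ) : ℚ) - m) = m + 1 := by push_cast; ring
  rw [hlast]
  have hmain : ∑ i ∈ Finset.range (2 * m + 1),
      ((-1 : ℚ) ^ (2 * m + 1 - i) * (Nat.choose (2 * m + 1) i : ℚ) * ((i : ℚ) - m) ^ (p + 1) -
        (m + 1) * ((-1 : ℚ) ^ (2 * m + 1 - i) * (Nat.choose (2 * m + 1) i : ℚ) *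
          ((i : ℚ) - m) ^ p)) = 0 := by
    rw [← mul_zero (-(2 * (m : ℚ) + 1)), ← sum_centered_odd_pow m p hp, Finset.mul_sum]
    refine Finset.sum_congr rfl fun i hi => ?_
    have hi' : i ≤ 2 * m + 1 := (Finset.mem_range.mp hi).le
    have habs : ((2 * m).choose i : ℚ) * (2 * m + 1) =
        ((2 * m + 1).choose i : ℚ) * (2 * m + 1 - i) := by
      have h := congrArg (Nat.cast (R := ℚ)) (Nat.choose_mul_succ_eq (2 * m) i)
      push_cast [Nat.cast_sub hi'] at h
      exact h
    linear_combination ((-1 : ℚ) ^ (2 * m + 1 - i) * ((i : ℚ) - m) ^ p) * habs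
  rw [hmain]
  ring
end

section
/- For all integers n ≥ 3 and 3 ≤ k ≤ n-1 with both k and n odd, T(n,k) = ((k+1)/2) · T(n-1,k) + (2/(k-1)) · T(n-1,k-2). -/
/-!
Write `k = 2 * p + 3` and `N = n - 1`, which is even. Up to the factor `-1 / k!`, the difference
`T(n,k) - ((k+1)/2) T(N,k)` is `∑ i, (-1)^i C(2p+3,i) (i-p-1)^N (i-(2p+3))`. Absorption,
`(2p+3-i) C(2p+3,i) = (2p+3) C(2p+2,i)`, turns this into the central difference
`∑ i, (-1)^i C(2p+2,i) (i-p-1)^N`. Pascal's rule splits the latter into two sums over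
`C(2p+1,i)`, which the reflection `i ↦ 2p+1-i` exchanges because `N` is even; each of them is,
up to sign, the sum that defines `T(N,k-2)`.
-/

open Finset

/-- The alternating sum `∑ i, (-1)^i C(M,i) (i-c)^n`, an unnormalized finite difference of order
`M` with centre `c`. -/
def altSum (n M c : ℕ) : ℚ :=
  ∑ i ∈ range (M + 1), (M.choose i : ℚ) * ((-1) ^ i * ((i : ℚ) - c) ^ n)

lemma flickT_odd_eq (n p : ℕ) :
    flickT n (2 * p + 1) = -altSum n (2 * p + 1) p / ((2 * p + 1).factorial : ℚ) := by
  have h2 : (2 * p + 1) / 2 = p := by omega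
  rw [flickT, altSum, h2, ← sum_neg_distrib, one_div, div_eq_inv_mul]
  congr 1
  refine sum_congr rfl fun i hi => ?_
  have hi' : i ≤ 2 * p + 1 := by have := mem_range.1 hi; omega
  have hs : (-1 : ℚ) ^ (2 * p + 1 - i) = -(-1) ^ i := by
    obtain ⟨j, hj⟩ := Nat.exists_eq_add_of_le hi'
    have e : 2 * p + 1 - i = j := by omega
    have h1 : (-1 : ℚ) ^ i * (-1) ^ j = -1 := by
      rw [← pow_add, ← hj, pow_succ, pow_mul]; norm_num
    rw [e]
    rcases neg_one_pow_eq_or ℚ i with h | h <;> rw [h] at h1 ⊢ <;> linarith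
  rw [hs]; ring

/-- Multiplying the summand by `i - (2p+3)` lowers the order by one, by the absorption identity
`(2p+3-i) C(2p+3,i) = (2p+3) C(2p+2,i)`. -/
lemma altSum_absorb (N p : ℕ) :
    altSum (N + 1) (2 * p + 3) (p + 1) - (p + 2) * altSum N (2 * p + 3) (p + 1)
      = -(2 * p + 3) * altSum N (2 * p + 2) (p + 1) := by
  unfold altSum
  rw [mul_sum, ← sum_sub_distrib, sum_range_succ, mul_sum]
  -- the factor `i - (2p+3)` kills the last term `i = 2p+3`
  have hlast : ∀ a b c : ℚ, c = p + 2 → a * (b * c ^ (N + 1)) - (p + 2) * (a * (b * c ^ N)) = 0 := by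
    rintro a b c rfl; ring
  rw [hlast _ _ _ (by push_cast; ring), add_zero]
  refine sum_congr rfl fun i hi => ?_
  have hi' : i ≤ 2 * p + 2 := by have := mem_range.1 hi; omega
  have h : ((2 * p + 2).choose i : ℚ) * (2 * p + 3)
      = ((2 * p + 3).choose i : ℚ) * (2 * p + 3 - i) := by
    have := Nat.choose_mul_succ_eq (2 * p + 2) i
    have h' := congrArg (Nat.cast (R := ℚ)) this
    rw [Nat.cast_mul, Nat.cast_mul, Nat.cast_sub (by omega)] at h'
    push_cast at h'
    convert h' using 2 <;> ring
  push_cast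
  linear_combination ((-1 : ℚ) ^ i * ((i : ℚ) - (p + 1)) ^ N) * h

/-- For even exponents, the two halves of Pascal's rule contribute equally to the central
difference of even order. -/
lemma altSum_even (N p : ℕ) (hN : Even N) :
    altSum N (2 * p + 2) (p + 1) = -2 * altSum N (2 * p + 1) p := by
  have hpascal := sum_choose_succ_mul
    (fun i _ => (-1 : ℚ) ^ i * ((i : ℚ) - ((p + 1 : ℕ) : ℚ)) ^ N) (2 * p + 1)
  have hreflect : ∑ i ∈ range (2 * p + 1 + 1), ((2 * p + 1).choose i : ℚ) *
      ((-1) ^ i * ((i : ℚ) - ((p + 1 : ℕ) : ℚ)) ^ N) = -altSum N (2 * p + 1) p := by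
    rw [← sum_range_reflect, altSum, ← sum_neg_distrib]
    refine sum_congr rfl fun i hi => ?_
    have hi' : i ≤ 2 * p + 1 := by have := mem_range.1 hi; omega
    obtain ⟨j, hj⟩ := Nat.exists_eq_add_of_le hi'
    have e : 2 * p + 1 + 1 - 1 - i = j := by omega
    have hc : (2 * p + 1).choose j = (2 * p + 1).choose i := by
      rw [hj]; exact (Nat.choose_symm_add).symm
    have h1 : (-1 : ℚ) ^ i * (-1) ^ j = -1 := by
      rw [← pow_add, ← hj, pow_succ, pow_mul]; norm_num
    have hs : (-1 : ℚ) ^ j = -(-1) ^ i := by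
      rcases neg_one_pow_eq_or ℚ i with h | h <;> rw [h] at h1 ⊢ <;> linarith
    have hx : (j : ℚ) - ((p + 1 : ℕ) : ℚ) = -((i : ℚ) - p) := by
      have : (2 * p + 1 : ℚ) = i + j := by exact_mod_cast hj
      push_cast; linarith
    rw [e, hc, hs, hx, hN.neg_pow]; ring
  have hshift : ∑ i ∈ range (2 * p + 1 + 1), ((2 * p + 1).choose i : ℚ) *
      ((-1) ^ (i + 1) * (((i + 1 : ℕ) : ℚ) - ((p + 1 : ℕ) : ℚ)) ^ N)
        = -altSum N (2 * p + 1) p := by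
    rw [altSum, ← sum_neg_distrib]
    refine sum_congr rfl fun i _ => ?_
    push_cast
    rw [add_sub_add_right_eq_sub]; ring
  change altSum N (2 * p + 2) (p + 1) = _ at hpascal
  rw [hpascal]
  linear_combination hreflect + hshift

/-- For all integers `n ≥ 3` and `3 ≤ k ≤ n-1` with both `k` and `n` odd,
`T(n,k) = ((k+1)/2) · T(n-1,k) + (2/(k-1)) · T(n-1,k-2)`. -/
theorem flickT_odd_odd (n k : ℕ) (hn : 3 ≤ n) (hk : 3 ≤ k) (hkn : k ≤ n - 1)
    (hko : Odd k) (hno : Odd n) :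
    flickT n k = (((k : ℚ) + 1) / 2) * flickT (n - 1) k
      + (2 / ((k : ℚ) - 1)) * flickT (n - 1) (k - 2) := by
  obtain ⟨p, rfl⟩ : ∃ p, k = 2 * p + 3 := by
    obtain ⟨q, rfl⟩ := hko
    exact ⟨q - 1, by omega⟩
  obtain ⟨N, rfl⟩ : ∃ N, n = N + 1 := ⟨n - 1, by omega⟩
  have hN : Even N := by
    rcases Nat.even_or_odd N with h | h
    · exact h
    · exact absurd h.add_one (Nat.not_even_iff_odd.2 hno)
  have e1 : N + 1 - 1 = N := rfl
  have e2 : 2 * p + 3 - 2 = 2 * p + 1 := rfl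
  have e3 : 2 * p + 3 = 2 * (p + 1) + 1 := by ring
  have hT : ∀ m, flickT m (2 * p + 3)
      = -altSum m (2 * p + 3) (p + 1) / ((2 * p + 3).factorial : ℚ) := fun m => by
    rw [e3]; exact flickT_odd_eq m (p + 1)
  have hf : ((2 * p + 3).factorial : ℚ)
      = (2 * p + 3) * (2 * p + 2) * ((2 * p + 1).factorial : ℚ) := by
    rw [Nat.factorial_succ, Nat.factorial_succ]; push_cast; ring
  have h0 : ((2 * p + 1).factorial : ℚ) ≠ 0 := by positivity
  have h1 : (2 * p + 3 : ℚ) ≠ 0 := by positivity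
  have h2 : (p + 1 : ℚ) ≠ 0 := by positivity
  have hA := altSum_absorb N p
  rw [altSum_even N p hN] at hA
  have hA' : altSum (N + 1) (2 * p + 3) (p + 1) = (p + 2) * altSum N (2 * p + 3) (p + 1)
      + 2 * (2 * p + 3) * altSum N (2 * p + 1) p := by linarith
  rw [e1, e2, hT, hT, flickT_odd_eq, hf, hA']
  have e4 : ((2 * p + 3 : ℕ) : ℚ) - 1 = 2 * (p + 1) := by push_cast; ring
  have e5 : (2 * p + 2 : ℚ) = 2 * (p + 1) := by ring
  rw [e4, e5]
  push_cast
  field_simp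
  ring
end

section
/- For all integers n ≥ 2 and 2 ≤ k ≤ n with both k and n even, T(n,k) = T(n-1,k-1). -/
/-!
Write `k = 2m`. Absorption `j * C(2m, j) = 2m * C(2m - 1, j - 1)` and the shift `j = i + 1`, which
turns `i - (m - 1)` into `j - m`, give
`T(n-1, k-1) = (1/k!) * ∑ j, (-1)^(k-j) * C(k, j) * j * (j - m)^(n-1)`.
Splitting `j = (j - m) + m` yields `T(n, k)` plus a multiple of the `k`-th central difference of the
odd power `x^(n-1)`, and that difference vanishes by the symmetry `j ↦ k - j`.
-/

open Finset

/-- An even-order central difference at `0` of an odd power vanishes. -/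
lemma central_sum_odd_eq_zero (m r : ℕ) (hr : Odd r) :
    ∑ j ∈ Finset.range (2 * m + 1),
      (-1 : ℚ) ^ (2 * m - j) * (Nat.choose (2 * m) j : ℚ) * ((j : ℚ) - (m : ℚ)) ^ r = 0 := by
  set f : ℕ → ℚ := fun j =>
    (-1 : ℚ) ^ (2 * m - j) * (Nat.choose (2 * m) j : ℚ) * ((j : ℚ) - (m : ℚ)) ^ r with hf
  have hrefl : ∀ j ∈ Finset.range (2 * m + 1), f (2 * m + 1 - 1 - j) = - f j := by
    intro j hj
    have hj' : j ≤ 2 * m := Nat.lt_succ_iff.mp (Finset.mem_range.mp hj)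
    have hsign : (-1 : ℚ) ^ j = (-1) ^ (2 * m - j) :=
      neg_one_pow_congr (by grind)
    simp only [hf, Nat.add_sub_cancel, Nat.sub_sub_self hj', Nat.choose_symm hj', hsign,
      Nat.cast_sub hj']
    have : ((2 * m : ℕ) : ℚ) - j - m = -((j : ℚ) - m) := by push_cast; ring
    rw [this, hr.neg_pow]
    ring
  have h := Finset.sum_range_reflect f (2 * m + 1)
  rw [Finset.sum_congr rfl hrefl, Finset.sum_neg_distrib] at h
  change ∑ j ∈ Finset.range (2 * m + 1), f j = 0
  linarith

/-- For all integers `n ≥ 2` and `2 ≤ k ≤ n` with both `k` and `n` even,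
`T(n,k) = T(n-1,k-1)`. -/
theorem flickT_even_even_shift (n k : ℕ) (hn : 2 ≤ n) (hk : 2 ≤ k) (hkn : k ≤ n)
    (hke : Even k) (hne : Even n) :
    flickT n k = flickT (n - 1) (k - 1) := by
  obtain ⟨m, hm⟩ := hke.two_dvd
  obtain ⟨p, rfl⟩ : ∃ p, m = p + 1 := ⟨m - 1, by omega⟩
  obtain ⟨r, rfl⟩ : ∃ r, n = r + 1 := ⟨n - 1, by omega⟩
  have hr : Odd r := by grind
  have hk1 : k = (2 * p + 1) + 1 := by omega
  have h0 := central_sum_odd_eq_zero (p + 1) r hr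
  rw [← hm, hk1] at h0
  subst hk1
  have hd : (2 * p + 1 + 1) / 2 = p + 1 := by omega
  have hd' : (2 * p + 1) / 2 = p := by omega
  simp only [flickT, Nat.add_sub_cancel, hd, hd']
  have hsplit : ∑ j ∈ Finset.range (2 * p + 1 + 1 + 1), (-1 : ℚ) ^ (2 * p + 1 + 1 - j) *
        (Nat.choose (2 * p + 1 + 1) j : ℚ) * ((j : ℚ) - ((p + 1 : ℕ) : ℚ)) ^ (r + 1)
      = ∑ j ∈ Finset.range (2 * p + 1 + 1 + 1), (-1 : ℚ) ^ (2 * p + 1 + 1 - j) *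
        (Nat.choose (2 * p + 1 + 1) j : ℚ) * j * ((j : ℚ) - ((p + 1 : ℕ) : ℚ)) ^ r := by
    rw [← sub_eq_zero, ← Finset.sum_sub_distrib, ← mul_zero (-((p + 1 : ℕ) : ℚ)), ← h0,
      Finset.mul_sum]
    refine Finset.sum_congr rfl fun j _ => ?_
    ring
  have habs : ∑ j ∈ Finset.range (2 * p + 1 + 1 + 1), (-1 : ℚ) ^ (2 * p + 1 + 1 - j) *
        (Nat.choose (2 * p + 1 + 1) j : ℚ) * j * ((j : ℚ) - ((p + 1 : ℕ) : ℚ)) ^ r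
      = ((2 * p + 1 + 1 : ℕ) : ℚ) * ∑ i ∈ Finset.range (2 * p + 1 + 1),
        (-1 : ℚ) ^ (2 * p + 1 - i) * (Nat.choose (2 * p + 1) i : ℚ) *
          ((i : ℚ) - (p : ℚ)) ^ r := by
    rw [Finset.sum_range_succ', Finset.mul_sum]
    simp only [Nat.cast_zero, mul_zero, zero_mul, add_zero]
    refine Finset.sum_congr rfl fun i _ => ?_
    have hc : ((2 * p + 1 + 1 : ℕ) : ℚ) * (Nat.choose (2 * p + 1) i : ℚ)
        = (Nat.choose (2 * p + 1 + 1) (i + 1) : ℚ) * ((i + 1 : ℕ) : ℚ) :=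
      mod_cast Nat.add_one_mul_choose_eq (2 * p + 1) i
    have hx : ((i + 1 : ℕ) : ℚ) - ((p + 1 : ℕ) : ℚ) = (i : ℚ) - p := by push_cast; ring
    rw [hx, Nat.add_sub_add_right]
    linear_combination (-(-1 : ℚ) ^ (2 * p + 1 - i) * ((i : ℚ) - p) ^ r) * hc
  rw [hsplit, habs, Nat.factorial_succ (2 * p + 1), Nat.cast_mul]
  have h1 : ((2 * p + 1 + 1 : ℕ) : ℚ) ≠ 0 := Nat.cast_ne_zero.mpr (Nat.succ_ne_zero _)
  have h2 : ((2 * p + 1).factorial : ℚ) ≠ 0 := Nat.cast_ne_zero.mpr (Nat.factorial_ne_zero _)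
  field_simp
end

section
/- For all integers n ≥ 3 and 3 ≤ k ≤ n-1 with both k and n odd, T(n,k) = ((k+1)/2) · T(n-1,k) + T(n-1,k-1). -/
/-!
Write `k = 2m + 1`, so that both `k` and `k - 1` are centred at `m`. In
`T(n,k) - (m+1) T(n-1,k)` the `i`-th summand acquires the factor `(i - m) - (m + 1) = i - k`.
It kills the term `i = k`, and the absorption identity `(k - i) C(k,i) = k C(k-1,i)` turns the
remaining terms into `k` times those of `T(n-1,k-1)`; the factor `k` is cancelled by
`k! = k (k-1)!`.
-/

open Finset

lemma choose_absorption (j i : ℕ) (hi : i ≤ j) :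
    ((j + 1 : ℕ) - (i : ℚ)) * ((j + 1).choose i : ℚ) = (j + 1 : ℕ) * (j.choose i : ℚ) := by
  have h := Nat.choose_mul_succ_eq j i
  have hcast : (j.choose i : ℚ) * (j + 1 : ℕ) = ((j + 1).choose i : ℚ) * ((j + 1 - i : ℕ) : ℚ) := by
    exact_mod_cast h
  rw [Nat.cast_sub (by omega)] at hcast
  linear_combination -hcast

/-- For all integers `n ≥ 3` and `3 ≤ k ≤ n-1` with both `k` and `n` odd,
`T(n,k) = ((k+1)/2) · T(n-1,k) + T(n-1,k-1)`. -/
theorem flickT_odd_odd' (n k : ℕ) (hn : 3 ≤ n) (hk : 3 ≤ k) (hkn : k ≤ n - 1)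
    (hko : Odd k) (hno : Odd n) :
    flickT n k = (((k : ℚ) + 1) / 2) * flickT (n - 1) k + flickT (n - 1) (k - 1) := by
  obtain ⟨m, rfl⟩ := hko
  obtain ⟨N, rfl⟩ : ∃ N, n = N + 1 := ⟨n - 1, by omega⟩
  have h1 : (2 * m + 1) / 2 = m := by omega
  have h2 : (2 * m) / 2 = m := by omega
  simp only [flickT, Nat.add_sub_cancel, h1, h2]
  -- Collect both sums on one side and split off the term `i = k`, whose factor `i - k` is zero.
  rw [mul_left_comm, ← sub_eq_iff_eq_add', ← mul_sub, Finset.mul_sum,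
    ← Finset.sum_sub_distrib, Finset.sum_range_succ]
  have hterm : ∀ i ∈ Finset.range (2 * m + 1),
      (-1 : ℚ) ^ (2 * m + 1 - i) * ((2 * m + 1).choose i : ℚ) * ((i : ℚ) - m) ^ (N + 1)
        - (((2 * m + 1 : ℕ) : ℚ) + 1) / 2 *
          ((-1 : ℚ) ^ (2 * m + 1 - i) * ((2 * m + 1).choose i : ℚ) * ((i : ℚ) - m) ^ N)
      = ((2 * m + 1 : ℕ) : ℚ) *
          ((-1 : ℚ) ^ (2 * m - i) * ((2 * m).choose i : ℚ) * ((i : ℚ) - m) ^ N) := by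
    intro i hi
    have hile : i ≤ 2 * m := by simpa [Nat.lt_succ_iff] using hi
    have hs : 2 * m + 1 - i = 2 * m - i + 1 := by omega
    have hc := choose_absorption (2 * m) i hile
    rw [hs]
    push_cast at hc ⊢
    linear_combination (-1 : ℚ) ^ (2 * m - i) * ((i : ℚ) - m) ^ N * hc
  rw [Finset.sum_congr rfl hterm, ← Finset.mul_sum, Nat.factorial_succ]
  have hf : ((2 * m).factorial : ℚ) ≠ 0 := by exact_mod_cast Nat.factorial_ne_zero _
  have hk0 : (2 * (m : ℚ) + 1) ≠ 0 := by positivity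
  push_cast
  field_simp
  simp only [Nat.choose_self, Nat.sub_self]
  ring
end

section
/- For every integer m ≥ 1 and every rational number x, x^m = Σ_{k=1}^{m} T(m,k) · x^{[k]}_-, where x^{[k]}_- is the falling flickering basis polynomial. -/
/-!
The nodes `e_0, …, e_k` are, up to order, the consecutive integers from `-⌊k/2⌋` to `⌈k/2⌉`, so
`T(n,k)` is the divided difference of `t ↦ t ^ n` at these nodes and the claim is Newton's
interpolation formula. The only property of divided differences needed is the Leibniz rule for
multiplication by `t`, namely `T(n+1,k+1) = e_{k+1} T(n,k+1) + T(n,k)` (`flickT_succ_succ`), which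
follows from absorption identities for binomial coefficients. Combined with
`x · x^{[k]}_- = x^{[k+1]}_- + e_k x^{[k]}_-` and the vanishing of `T(n,k)` for `k > n`, it gives the
expansion of `x ^ n` by induction on `n`.
-/

open Finset

/-- The nodes `e_i` of the falling flickering basis: `0, 1, -1, 2, -2, …`. -/
def eSeq (i : ℕ) : ℚ := if i % 2 = 1 then (((i + 1) / 2 : ℕ) : ℚ) else -(((i / 2 : ℕ)) : ℚ)

/-- The falling flickering basis `x^{[k]}_- = ∏_{i=0}^{k-1} (x - e_i)`,
so `x^{[1]}_- = x`, `x^{[2]}_- = x(x-1)`, `x^{[3]}_- = x(x-1)(x+1)`, … -/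
def fallingFlick (k : ℕ) (x : ℚ) : ℚ := ∏ i ∈ Finset.range k, (x - eSeq i)

lemma flickT_zero_succ (k : ℕ) : flickT 0 (k + 1) = 0 := by
  have h := add_pow (1 : ℚ) (-1) (k + 1)
  simp only [one_pow, one_mul, add_neg_cancel, ne_eq, Nat.add_eq_zero_iff, one_ne_zero, and_false,
    not_false_eq_true, zero_pow] at h
  simp only [flickT, pow_zero, mul_one]
  rw [← h, mul_zero]

lemma flickT_zero_right (n : ℕ) : flickT n 0 = 0 ^ n := by
  simp [flickT]

/-- The Leibniz rule for divided differences of `t · t ^ n`. In the sum for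
`T(n+1,k+1) - e_{k+1} T(n,k+1)` the node `e_{k+1}` is the largest one if `k` is even and the
smallest one if `k` is odd, so the extra factor `i - ⌊(k+1)/2⌋ - e_{k+1}` is `i - (k + 1)` or `i`
respectively, and is absorbed by the binomial coefficient. -/
lemma flickT_succ_succ (n k : ℕ) :
    flickT (n + 1) (k + 1) = eSeq (k + 1) * flickT n (k + 1) + flickT n k := by
  suffices h : ∑ i ∈ range (k + 2), (-1 : ℚ) ^ (k + 1 - i) * ((k + 1).choose i : ℚ) *
        ((i : ℚ) - (((k + 1) / 2 : ℕ) : ℚ)) ^ n *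
          ((i : ℚ) - (((k + 1) / 2 : ℕ) : ℚ) - eSeq (k + 1)) =
      (k + 1) * ∑ i ∈ range (k + 1), (-1 : ℚ) ^ (k - i) * (k.choose i : ℚ) *
        ((i : ℚ) - ((k / 2 : ℕ) : ℚ)) ^ n by
    have hk : (k.factorial : ℚ) ≠ 0 := by exact_mod_cast k.factorial_ne_zero
    have hk1 : (k : ℚ) + 1 ≠ 0 := by positivity
    simp only [mul_sub _ _ (eSeq (k + 1)), sum_sub_distrib, ← sum_mul] at h
    simp only [mul_assoc, ← pow_succ] at h
    simp only [flickT, mul_assoc, Nat.factorial_succ, Nat.cast_mul, Nat.cast_succ]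
    rw [sub_eq_iff_eq_add] at h
    rw [h]
    field_simp
    ring
  rw [mul_sum]
  rcases Nat.even_or_odd' k with ⟨c, rfl | rfl⟩
  · have h1 : (2 * c + 1) / 2 = c := by omega
    have h2 : 2 * c / 2 = c := by omega
    have h3 : eSeq (2 * c + 1) = c + 1 := by
      have h4 : (2 * c + 1) % 2 = 1 := by omega
      have h5 : (2 * c + 1 + 1) / 2 = c + 1 := by omega
      simp [eSeq, h4, h5]
    rw [sum_range_succ, h1, h2, h3]
    have hlast : (((2 * c + 1 : ℕ) : ℚ) - c - (c + 1)) = 0 := by push_cast; ring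
    rw [hlast, mul_zero, add_zero]
    refine sum_congr rfl fun i hi => ?_
    have hi' : i ≤ 2 * c := by simpa [Nat.lt_succ_iff] using hi
    have h6 : ((2 * c : ℕ).choose i : ℚ) * ((2 * c : ℕ) + 1) =
        ((2 * c + 1).choose i : ℚ) * ((2 * c : ℕ) + 1 - i) := by
      have := Nat.choose_mul_succ_eq (2 * c) i
      have h7 : ((2 * c + 1 - i : ℕ) : ℚ) = (2 * c : ℕ) + 1 - i := by
        rw [Nat.cast_sub (by omega)]; push_cast; ring
      rw [← h7]
      exact_mod_cast this
    rw [Nat.succ_sub hi', pow_succ]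
    push_cast at h6 ⊢
    linear_combination (-(-1 : ℚ) ^ (2 * c - i) * ((i : ℚ) - c) ^ n) * h6
  · have h1 : (2 * c + 1 + 1) / 2 = c + 1 := by omega
    have h2 : (2 * c + 1) / 2 = c := by omega
    have h3 : eSeq (2 * c + 1 + 1) = -(c + 1) := by
      have h4 : (2 * c + 1 + 1) % 2 = 0 := by omega
      simp [eSeq, h4, h1]
    rw [sum_range_succ', h1, h2, h3]
    have hfirst : (((0 : ℕ) : ℚ) - ((c + 1 : ℕ) : ℚ) - -(c + 1)) = 0 := by push_cast; ring
    rw [hfirst, mul_zero, add_zero]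
    refine sum_congr rfl fun i _ => ?_
    have h6 : ((2 * c + 1 : ℕ) + 1 : ℚ) * ((2 * c + 1).choose i : ℚ) =
        ((2 * c + 1 + 1).choose (i + 1) : ℚ) * (i + 1) := by
      exact_mod_cast Nat.add_one_mul_choose_eq (2 * c + 1) i
    have h8 : (((i + 1 : ℕ) : ℚ) - ((c + 1 : ℕ) : ℚ)) = i - c := by push_cast; ring
    rw [Nat.add_sub_add_right, h8]
    push_cast at h6 ⊢
    linear_combination (-(-1 : ℚ) ^ (2 * c + 1 - i) * ((i : ℚ) - c) ^ n) * h6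

lemma flickT_eq_zero_of_lt {n k : ℕ} (h : n < k) : flickT n k = 0 := by
  induction n generalizing k with
  | zero =>
    obtain ⟨k, rfl⟩ := Nat.exists_eq_succ_of_ne_zero h.ne'
    exact flickT_zero_succ k
  | succ n ih =>
    obtain ⟨k, rfl⟩ := Nat.exists_eq_succ_of_ne_zero (Nat.ne_zero_of_lt h)
    rw [Nat.succ_eq_add_one, flickT_succ_succ, ih (by omega), ih (by omega), mul_zero, add_zero]

lemma fallingFlick_succ (k : ℕ) (x : ℚ) :
    fallingFlick (k + 1) x = fallingFlick k x * (x - eSeq k) :=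
  prod_range_succ _ _

/-- The expansion including the term `k = 0`, which makes it valid for `n = 0` as well. -/
lemma pow_eq_sum_range (n : ℕ) (x : ℚ) :
    x ^ n = ∑ k ∈ range (n + 1), flickT n k * fallingFlick k x := by
  induction n with
  | zero => simp [flickT_zero_right, fallingFlick]
  | succ n ih =>
    -- The sum of the `e_k` terms is extended by its vanishing term `k = n + 1`, and its term
    -- `k = 0` drops out because `e_0 = 0`.
    have hshift : ∑ k ∈ range (n + 1), eSeq k * flickT n k * fallingFlick k x =
        ∑ k ∈ range (n + 1), eSeq (k + 1) * flickT n (k + 1) * fallingFlick (k + 1) x := by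
      have h := sum_range_succ (fun k => eSeq k * flickT n k * fallingFlick k x) (n + 1)
      rw [sum_range_succ', flickT_eq_zero_of_lt (Nat.lt_succ_self n)] at h
      simpa [eSeq] using h.symm
    rw [sum_range_succ', flickT_zero_right, zero_pow n.succ_ne_zero, zero_mul, add_zero]
    simp only [flickT_succ_succ, add_mul, sum_add_distrib]
    rw [← hshift, ← sum_add_distrib, pow_succ, ih, sum_mul]
    refine sum_congr rfl fun k _ => ?_
    rw [fallingFlick_succ]
    ring

/-- For every integer `m ≥ 1` and every rational `x`,
`x^m = Σ_{k=1}^{m} T(m,k) · x^{[k]}_-`. -/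
theorem pow_eq_sum_flickT_fallingFlick (m : ℕ) (hm : 1 ≤ m) (x : ℚ) :
    x ^ m = ∑ k ∈ Finset.Icc 1 m, flickT m k * fallingFlick k x := by
  rw [pow_eq_sum_range, sum_range_succ', flickT_zero_right, zero_pow (by omega), zero_mul, add_zero,
    range_eq_Ico, sum_Ico_add' (fun k => flickT m k * fallingFlick k x) 0 m 1]
  rfl
end

section
/- For every integer k ≥ 1 and every rational number x, I_{k+1}(x) - I_{k+1}(x-1) = (k+1) · x^{[k]}_-, and moreover I_{k+1}(0) = 0. -/
/-!
Up to order, the roots of `fallingFlick (2 * m)` are the consecutive integers `-(m - 1), …, m`, and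
those of `intFlick (2 * m + 1)` are `-m, …, m`; substituting `x - 1` shifts the latter to
`-(m - 1), …, m + 1`. Hence `intFlick (2 * m + 1)` at `x` and at `x - 1` are both multiples of
`fallingFlick (2 * m) x`, with cofactors `x + m` and `x - m - 1`, whose difference is `2 * m + 1`
(`intFlick_odd`, `intFlick_odd_sub_one`, by induction on `m`). Multiplying by one further factor
settles the other parity: the cofactors of `fallingFlick (2 * m + 1) x` are `x + m + 1` and
`x - m - 1`, whose difference is `2 * m + 2`.
-/

open Finset

/-- The nodes `f_i` of the integral flickering basis: `0, -1, 1, -2, 2, …`. -/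
def fSeq (i : ℕ) : ℚ := if i % 2 = 1 then -(((i + 1) / 2 : ℕ) : ℚ) else (((i / 2 : ℕ)) : ℚ)

/-- The integral flickering basis `I_k(x) = ∏_{i=0}^{k-1} (x - f_i)`,
so `I_1(x) = x`, `I_2(x) = x(x+1)`, `I_3(x) = x(x+1)(x-1)`, … -/
def intFlick (k : ℕ) (x : ℚ) : ℚ := ∏ i ∈ Finset.range k, (x - fSeq i)

lemma eSeq_even (m : ℕ) : eSeq (2 * m) = -(m : ℚ) := by
  simp [eSeq]

lemma eSeq_odd (m : ℕ) : eSeq (2 * m + 1) = (m : ℚ) + 1 := by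
  have h : (2 * m + 1 + 1) / 2 = m + 1 := by omega
  have h' : (2 * m + 1) % 2 = 1 := by omega
  simp [eSeq, h, h']

lemma fSeq_eq_neg_eSeq (i : ℕ) : fSeq i = -eSeq i := by
  unfold fSeq eSeq
  split_ifs <;> simp

lemma intFlick_succ (k : ℕ) (x : ℚ) :
    intFlick (k + 1) x = intFlick k x * (x + eSeq k) := by
  rw [intFlick, Finset.prod_range_succ, fSeq_eq_neg_eSeq, sub_neg_eq_add, intFlick]

lemma fallingFlick_add_two (m : ℕ) (x : ℚ) :
    fallingFlick (2 * (m + 1)) x = fallingFlick (2 * m) x * (x + m) * (x - m - 1) := by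
  rw [show 2 * (m + 1) = 2 * m + 1 + 1 by ring, fallingFlick_succ, fallingFlick_succ,
    eSeq_even, eSeq_odd]
  ring

lemma intFlick_add_two (m : ℕ) (x : ℚ) :
    intFlick (2 * (m + 1) + 1) x = intFlick (2 * m + 1) x * (x + m + 1) * (x - m - 1) := by
  rw [intFlick_succ, show 2 * (m + 1) = 2 * m + 1 + 1 by ring, intFlick_succ (2 * m + 1),
    eSeq_odd, show 2 * m + 1 + 1 = 2 * (m + 1) by ring, eSeq_even]
  push_cast
  ring

lemma intFlick_odd (m : ℕ) (x : ℚ) :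
    intFlick (2 * m + 1) x = fallingFlick (2 * m) x * (x + m) := by
  induction m with
  | zero => simp [intFlick, fallingFlick, fSeq]
  | succ m ih =>
    rw [intFlick_add_two, ih, fallingFlick_add_two]
    push_cast
    ring

lemma intFlick_odd_sub_one (m : ℕ) (x : ℚ) :
    intFlick (2 * m + 1) (x - 1) = fallingFlick (2 * m) x * (x - m - 1) := by
  induction m with
  | zero => simp [intFlick, fallingFlick, fSeq]
  | succ m ih =>
    rw [intFlick_add_two, ih, fallingFlick_add_two]
    push_cast
    ring

/-- For every integer `k ≥ 1` and every rational `x`,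
`I_{k+1}(x) - I_{k+1}(x-1) = (k+1) · x^{[k]}_-`, and moreover `I_{k+1}(0) = 0`. -/
theorem intFlick_diff (k : ℕ) (hk : 1 ≤ k) :
    (∀ x : ℚ, intFlick (k + 1) x - intFlick (k + 1) (x - 1)
        = ((k : ℚ) + 1) * fallingFlick k x) ∧ intFlick (k + 1) 0 = 0 := by
  refine ⟨fun x => ?_, ?_⟩
  · obtain ⟨m, rfl | rfl⟩ := Nat.even_or_odd' k
    · rw [intFlick_odd, intFlick_odd_sub_one]
      push_cast
      ring
    · rw [intFlick_succ, intFlick_succ _ (x - 1), intFlick_odd, intFlick_odd_sub_one,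
        fallingFlick_succ, eSeq_odd, eSeq_even]
      push_cast
      ring
  · exact Finset.prod_eq_zero (Finset.mem_range.mpr k.succ_pos) (by simp [fSeq])
end

section
/- For all integers n ≥ 1 and k ≥ 1, Todd(n,k) = T(2n+k-2, 2n-1); in particular every value Todd(n,k) is an entry of the flickering triangle T. -/
/-!
For `k ≥ 1` the right-hand side is the divided difference of `x ^ (2n+k-2)` at the `2n` consecutive
integers `-(n-1), …, n`, that is, the complete homogeneous symmetric polynomial `h_{k-1}` at these
points. Removing the node `n` gives `h_j(-(n-1), …, n) = n h_{j-1}(-(n-1), …, n) + h_j(-(n-1), …, n-1)`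
(`diffS_top`). The last set of nodes is symmetric about `0`, so for odd `j` its contribution vanishes
(`diffS_symm_odd`), which is the recursion of `Todd` for even `k = j + 1`. For even `j`, removing the
node `-(n-1)` (`diffS_bot`) leaves `h_j(-(n-2), …, n-1)` plus a multiple of an odd-degree symmetric
value, which is again `0`; this is the extra summand `Todd(n-1,k)` for odd `k`.
-/

open Finset

/-- The array `Todd(n,k)` (OEIS A394582): `Todd(n,1) = Todd(1,k) = 1` and for `n,k ≥ 2`,
`Todd(n,k) = n·Todd(n,k-1) + Todd(n-1,k)` if `k` is odd, `Todd(n,k) = n·Todd(n,k-1)` if `k` is even. -/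
def Todd : ℕ → ℕ → ℤ
  | 0, _ => 0
  | _, 0 => 0
  | 1, _ + 1 => 1
  | _ + 2, 1 => 1
  | n + 2, k + 2 =>
    if (k + 2) % 2 = 1 then
      (n + 2) * Todd (n + 2) (k + 1) + Todd (n + 1) (k + 2)
    else
      (n + 2) * Todd (n + 2) (k + 1)
  termination_by n k => n + k

/-- The divided difference of `x ^ N` at the `m + 1` nodes `-a, 1 - a, …, m - a`. -/
def diffS (N m : ℕ) (a : ℚ) : ℚ :=
  (1 / (Nat.factorial m : ℚ)) *
    ∑ i ∈ Finset.range (m + 1),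
      (-1 : ℚ) ^ (m - i) * (Nat.choose m i : ℚ) * ((i : ℚ) - a) ^ N

/-- Recursion obtained by removing the largest node `m + 1 - a`. -/
lemma diffS_top (N m : ℕ) (a : ℚ) :
    diffS (N + 1) (m + 1) a = (m + 1 - a) * diffS N (m + 1) a + diffS N m a := by
  have hf : (Nat.factorial m : ℚ) ≠ 0 := by positivity
  have hm : (m + 1 : ℚ) ≠ 0 := by positivity
  have key : ∑ i ∈ Finset.range (m + 1 + 1),
      (-1 : ℚ) ^ (m + 1 - i) * (Nat.choose (m + 1) i : ℚ) * ((i : ℚ) - a) ^ (N + 1)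
      = (m + 1 - a) * ∑ i ∈ Finset.range (m + 1 + 1),
          (-1 : ℚ) ^ (m + 1 - i) * (Nat.choose (m + 1) i : ℚ) * ((i : ℚ) - a) ^ N
        + (m + 1) * ∑ i ∈ Finset.range (m + 1),
          (-1 : ℚ) ^ (m - i) * (Nat.choose m i : ℚ) * ((i : ℚ) - a) ^ N := by
    rw [← sub_eq_iff_eq_add', Finset.mul_sum, Finset.mul_sum, ← Finset.sum_sub_distrib,
      Finset.sum_range_succ]
    have hlast : ((-1 : ℚ) ^ (m + 1 - (m + 1)) * (Nat.choose (m + 1) (m + 1) : ℚ) *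
        (((m + 1 : ℕ) : ℚ) - a) ^ (N + 1) - (m + 1 - a) *
        ((-1 : ℚ) ^ (m + 1 - (m + 1)) * (Nat.choose (m + 1) (m + 1) : ℚ) *
        (((m + 1 : ℕ) : ℚ) - a) ^ N)) = 0 := by
      push_cast; ring
    rw [hlast, add_zero]
    refine Finset.sum_congr rfl fun i hi => ?_
    have hi' : i ≤ m := Nat.lt_succ_iff.mp (Finset.mem_range.mp hi)
    have hc : (Nat.choose (m + 1) i : ℚ) * (m + 1 - i) = (m + 1) * Nat.choose m i := by
      have h := Nat.choose_mul_succ_eq m i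
      have h2 : ((m + 1 - i : ℕ) : ℚ) = m + 1 - i := by
        rw [Nat.cast_sub (by omega)]; push_cast; ring
      rw [← h2, mul_comm (m + 1 : ℚ)]
      exact_mod_cast h.symm
    rw [Nat.succ_sub hi', pow_succ, pow_succ]
    linear_combination (-1 : ℚ) ^ (m - i) * ((i : ℚ) - a) ^ N * hc
  unfold diffS
  rw [key, Nat.factorial_succ]
  push_cast
  field_simp

/-- Recursion obtained by removing the smallest node `-a`. -/
lemma diffS_bot (N m : ℕ) (a : ℚ) :
    diffS (N + 1) (m + 1) a = -a * diffS N (m + 1) a + diffS N m (a - 1) := by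
  have hf : (Nat.factorial m : ℚ) ≠ 0 := by positivity
  have hm : (m + 1 : ℚ) ≠ 0 := by positivity
  have key : ∑ i ∈ Finset.range (m + 1 + 1),
      (-1 : ℚ) ^ (m + 1 - i) * (Nat.choose (m + 1) i : ℚ) * ((i : ℚ) - a) ^ (N + 1)
      = -a * ∑ i ∈ Finset.range (m + 1 + 1),
          (-1 : ℚ) ^ (m + 1 - i) * (Nat.choose (m + 1) i : ℚ) * ((i : ℚ) - a) ^ N
        + (m + 1) * ∑ i ∈ Finset.range (m + 1),
          (-1 : ℚ) ^ (m - i) * (Nat.choose m i : ℚ) * ((i : ℚ) - (a - 1)) ^ N := by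
    rw [← sub_eq_iff_eq_add', Finset.mul_sum, Finset.mul_sum, ← Finset.sum_sub_distrib,
      Finset.sum_range_succ']
    have hfirst : ((-1 : ℚ) ^ (m + 1 - 0) * (Nat.choose (m + 1) 0 : ℚ) *
        (((0 : ℕ) : ℚ) - a) ^ (N + 1) - -a *
        ((-1 : ℚ) ^ (m + 1 - 0) * (Nat.choose (m + 1) 0 : ℚ) *
        (((0 : ℕ) : ℚ) - a) ^ N)) = 0 := by
      push_cast; ring
    rw [hfirst, add_zero]
    refine Finset.sum_congr rfl fun i _ => ?_
    have hc : (m + 1 : ℚ) * Nat.choose m i = Nat.choose (m + 1) (i + 1) * (i + 1) := by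
      exact_mod_cast Nat.add_one_mul_choose_eq m i
    have hx : ((i + 1 : ℕ) : ℚ) - a = i - (a - 1) := by push_cast; ring
    rw [Nat.add_sub_add_right, hx, pow_succ]
    linear_combination -(-1 : ℚ) ^ (m - i) * ((i : ℚ) - (a - 1)) ^ N * hc
  unfold diffS
  rw [key, Nat.factorial_succ]
  push_cast
  field_simp

/-- An odd power has divided difference `0` at the symmetric nodes `-p, …, p`. -/
lemma diffS_symm_odd (N p : ℕ) (hN : Odd N) : diffS N (2 * p) p = 0 := by
  unfold diffS
  rw [mul_eq_zero]
  right
  have h := Finset.sum_range_reflect (fun i : ℕ =>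
      (-1 : ℚ) ^ (2 * p - i) * (Nat.choose (2 * p) i : ℚ) * ((i : ℚ) - p) ^ N) (2 * p + 1)
  rw [← self_eq_neg, ← Finset.sum_neg_distrib]
  refine h.symm.trans (Finset.sum_congr rfl fun i hi => ?_)
  have hi' : i ≤ 2 * p := Nat.lt_succ_iff.mp (Finset.mem_range.mp hi)
  have e1 : 2 * p + 1 - 1 - i = 2 * p - i := by omega
  have e2 : ((2 * p - i : ℕ) : ℚ) - p = -((i : ℚ) - p) := by
    rw [Nat.cast_sub hi']; push_cast; ring
  -- `2 * p - i` and `i` have the same parity, so the reflection keeps the sign.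
  have e3 : (-1 : ℚ) ^ (2 * p - (2 * p - i)) = (-1) ^ (2 * p - i) := by
    rw [Nat.sub_sub_self hi']
    refine neg_one_pow_congr ?_
    rw [Nat.even_sub hi']; simp
  rw [e1, e2, e3, Nat.choose_symm hi', hN.neg_pow]
  ring

lemma diffS_zero (m : ℕ) (a : ℚ) : diffS 0 (m + 1) a = 0 := by
  have h := (Commute.all (1 : ℚ) (-1)).add_pow (m + 1)
  unfold diffS
  simp only [pow_zero, mul_one]
  simp only [one_pow, one_mul, add_neg_cancel, zero_pow (Nat.succ_ne_zero m)] at h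
  rw [← h, mul_zero]

lemma diffS_lt (N m : ℕ) (a : ℚ) (h : N < m) : diffS N m a = 0 := by
  induction N generalizing m with
  | zero => obtain ⟨m, rfl⟩ := Nat.exists_eq_add_of_lt h; simpa using diffS_zero m a
  | succ N ih =>
    obtain ⟨m, rfl⟩ : ∃ m', m = m' + 1 := ⟨m - 1, by omega⟩
    rw [diffS_top, ih _ (by omega), ih _ (by omega)]; ring

lemma diffS_self (m : ℕ) (a : ℚ) : diffS m m a = 1 := by
  induction m with
  | zero => simp [diffS]
  | succ m ih => rw [diffS_top, diffS_lt _ _ _ (by omega), ih]; ring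

/-- The case `p = n - 1`, `q = k - 1` of the theorem, free of truncated subtraction. -/
lemma Todd_eq_diffS (p q : ℕ) :
    (Todd (p + 1) (q + 1) : ℚ) = diffS (2 * p + q + 1) (2 * p + 1) p := by
  induction p generalizing q with
  | zero => simp [Todd, diffS, Finset.sum_range_succ]
  | succ r ihp =>
    induction q with
    | zero =>
      rw [Todd]
      simpa using (diffS_self (2 * (r + 1) + 1) _).symm
    | succ q ihq =>
      have h1 := diffS_top (2 * (r + 1) + q + 1) (2 * (r + 1)) ((r + 1 : ℕ) : ℚ)
      have h2 := ihp (q + 1)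
      rw [← ihq] at h1
      rw [show 2 * (r + 1) + (q + 1) + 1 = 2 * (r + 1) + q + 1 + 1 by ring, h1, Todd]
      rcases Nat.even_or_odd q with hq | hq
      · rw [if_neg (by grind), diffS_symm_odd _ _ (by grind)]
        push_cast; ring
      · have h3 := diffS_bot (2 * r + q + 2) (2 * r + 1) ((r + 1 : ℕ) : ℚ)
        have h4 := diffS_symm_odd (2 * r + q + 2) (r + 1) (by grind)
        rw [show 2 * (r + 1) = 2 * r + 1 + 1 by ring] at h4
        rw [h4, show ((r + 1 : ℕ) : ℚ) - 1 = r by push_cast; ring,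
          show 2 * r + q + 2 = 2 * r + (q + 1) + 1 by ring, ← h2] at h3
        rw [if_pos (by grind),
          show 2 * (r + 1) + q + 1 = 2 * r + (q + 1) + 1 + 1 by ring,
          show 2 * (r + 1) = 2 * r + 1 + 1 by ring, h3]
        push_cast; ring

/-- For all integers `n ≥ 1` and `k ≥ 1`, `Todd(n,k) = T(2n+k-2, 2n-1)`;
in particular every value `Todd(n,k)` is an entry of the flickering triangle `T`. -/
theorem Todd_eq_flickT (n k : ℕ) (hn : 1 ≤ n) (hk : 1 ≤ k) :
    (Todd n k : ℚ) = flickT (2 * n + k - 2) (2 * n - 1) := by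
  obtain ⟨p, rfl⟩ : ∃ p, n = p + 1 := ⟨n - 1, by omega⟩
  obtain ⟨q, rfl⟩ : ∃ q, k = q + 1 := ⟨k - 1, by omega⟩
  rw [Todd_eq_diffS, show 2 * (p + 1) + (q + 1) - 2 = 2 * p + q + 1 by omega,
    show 2 * (p + 1) - 1 = 2 * p + 1 by omega]
  unfold flickT diffS
  rw [show (2 * p + 1) / 2 = p by omega]
end

section
/- For all integers n ≥ 1 and k ≥ 1, Todd(n,k) = (1/(2n-1)!) · Σ_{i=0}^{2n-1} (-1)^{2n-1-i} · C(2n-1,i) · (i-n+1)^{2n+k-2}. -/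
/-!
Up to the factor `(2n-1)!`, the right-hand side is the forward difference `Δ^(2n-1)` of
`x ↦ x^(2n+k-2)` at `-(n-1)`, that is, the complete homogeneous polynomial of degree `k-1` in the
`2n` nodes `-(n-1), …, n`. Splitting off the largest node `n` (`powDiff_succ_top`) leaves `n` times
the value for `k-1` plus the complete homogeneous polynomial of the same degree `k-1` in the
symmetric nodes `-(n-1), …, n-1`. If `k` is even, the latter has odd degree and vanishes by symmetry
(`powDiff_symm`). If `k` is odd, splitting off the smallest node `-(n-1)` (`powDiff_succ_bot`)
produces the value for `n-1` plus a multiple of an odd-degree symmetric term, which is again zero.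
So the right-hand side satisfies the recurrence that defines `Todd`.
-/

open Finset

/-- The `m`-th forward difference (step `1`) of `x ↦ x ^ p`, evaluated at `a`. -/
def powDiff (m p : ℕ) (a : ℚ) : ℚ :=
  ∑ i ∈ Finset.range (m + 1), (-1 : ℚ) ^ (m - i) * (Nat.choose m i : ℚ) * (a + i) ^ p

/-- Discrete Leibniz rule, isolating the largest node `a + m + 1`. -/
lemma powDiff_succ_top (m p : ℕ) (a : ℚ) :
    powDiff (m + 1) (p + 1) a
      = (a + m + 1) * powDiff (m + 1) p a + (m + 1) * powDiff m p a := by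
  have key : powDiff (m + 1) (p + 1) a - (a + m + 1) * powDiff (m + 1) p a
      = (m + 1) * powDiff m p a := by
    unfold powDiff
    rw [Finset.mul_sum, ← Finset.sum_sub_distrib, Finset.sum_range_succ, Finset.mul_sum]
    -- The last term carries the factor `(a + (m+1)) - (a + m + 1) = 0`.
    have h0 : ∀ x y : ℚ, x * (a + ((m + 1 : ℕ) : ℚ)) ^ (p + 1)
        - (a + m + 1) * (x * (a + ((m + 1 : ℕ) : ℚ)) ^ p) + y = y := by
      intro x y; push_cast; ring
    rw [add_comm, h0]
    refine Finset.sum_congr rfl fun i hi => ?_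
    have hi' : i ≤ m := Nat.lt_succ_iff.mp (Finset.mem_range.mp hi)
    have hc : ((m + 1).choose i : ℚ) * (m + 1 - i) = (m + 1) * (m.choose i : ℚ) := by
      have h := Nat.choose_mul_succ_eq m i
      have h' : ((m.choose i * (m + 1) : ℕ) : ℚ) = (((m + 1).choose i * (m + 1 - i) : ℕ) : ℚ) := by
        rw [h]
      rw [Nat.cast_mul, Nat.cast_mul, Nat.cast_sub (by omega)] at h'
      push_cast at h'
      linarith
    rw [Nat.succ_sub hi', pow_succ, pow_succ]
    linear_combination (-1 : ℚ) ^ (m - i) * (a + i) ^ p * hc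
  linarith

/-- Discrete Leibniz rule, isolating the smallest node `a`. -/
lemma powDiff_succ_bot (m p : ℕ) (a : ℚ) :
    powDiff (m + 1) (p + 1) a
      = a * powDiff (m + 1) p a + (m + 1) * powDiff m p (a + 1) := by
  have key : powDiff (m + 1) (p + 1) a - a * powDiff (m + 1) p a
      = (m + 1) * powDiff m p (a + 1) := by
    unfold powDiff
    rw [Finset.mul_sum, ← Finset.sum_sub_distrib, Finset.sum_range_succ', Finset.mul_sum]
    have h0 : ∀ x y : ℚ, y + (x * (a + ((0 : ℕ) : ℚ)) ^ (p + 1)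
        - a * (x * (a + ((0 : ℕ) : ℚ)) ^ p)) = y := by
      intro x y; push_cast; ring
    rw [h0]
    refine Finset.sum_congr rfl fun i _ => ?_
    have hc : ((m + 1).choose (i + 1) : ℚ) * (i + 1) = (m + 1) * (m.choose i : ℚ) := by
      exact_mod_cast (Nat.add_one_mul_choose_eq m i).symm
    rw [Nat.succ_sub_succ, pow_succ]
    have e : a + ((i + 1 : ℕ) : ℚ) = a + 1 + i := by push_cast; ring
    rw [e]
    linear_combination (-1 : ℚ) ^ (m - i) * (a + 1 + i) ^ p * hc
  linarith

/-- On the symmetric nodes `-m, …, m`, the difference of an odd power vanishes. -/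
lemma powDiff_symm (m p : ℕ) (hp : Odd p) : powDiff (2 * m) p (-m) = 0 := by
  have h : powDiff (2 * m) p (-m) = -powDiff (2 * m) p (-m) := by
    conv_lhs => unfold powDiff
    rw [← Finset.sum_range_reflect]
    unfold powDiff
    rw [← Finset.sum_neg_distrib]
    refine Finset.sum_congr rfl fun i hi => ?_
    have hi' : i ≤ 2 * m := Nat.lt_succ_iff.mp (Finset.mem_range.mp hi)
    have e1 : 2 * m + 1 - 1 - i = 2 * m - i := by omega
    have e2 : 2 * m - (2 * m - i) = i := by omega
    rw [e1, e2, Nat.choose_symm hi']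
    have e3 : (-(m : ℚ) + ((2 * m - i : ℕ) : ℚ)) = -(-(m : ℚ) + i) := by
      rw [Nat.cast_sub hi']; push_cast; ring
    have e4 : (-1 : ℚ) ^ (2 * m - i) = (-1) ^ i := by
      grind [neg_one_pow_eq_ite]
    rw [e3, e4, hp.neg_pow]
    ring
  linarith

lemma powDiff_self (m : ℕ) (a : ℚ) : powDiff m m a = m.factorial := by
  have h := congrFun (fwdDiff_iter_eq_factorial (R := ℚ) (n := m)) a
  rw [fwdDiff_iter_eq_sum_shift] at h
  simpa [powDiff] using h

/-- The array scaled by `(2n-1)!` is a difference of powers; the indices are shifted by one so that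
no subtraction occurs. -/
lemma todd_mul_factorial (n k : ℕ) :
    ((2 * n + 1).factorial : ℚ) * (Todd (n + 1) (k + 1) : ℚ)
      = powDiff (2 * n + 1) (2 * n + 1 + k) (-n) := by
  induction n generalizing k with
  | zero =>
    rw [Todd]
    simp [powDiff, Finset.sum_range_succ]
  | succ n ihn =>
    induction k with
    | zero =>
      rw [Todd, add_zero, powDiff_self]
      simp
    | succ k ihk =>
      have top := powDiff_succ_top (2 * (n + 1)) (2 * (n + 1) + 1 + k) (-((n + 1 : ℕ) : ℚ))
      have bot := powDiff_succ_bot (2 * n + 1) (2 * (n + 1) + k) (-((n + 1 : ℕ) : ℚ))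
      have ea : -((n + 1 : ℕ) : ℚ) + 1 = -n := by push_cast; ring
      have hf : ((2 * (n + 1) + 1).factorial : ℚ)
          = (2 * n + 3) * ((2 * n + 2) * ((2 * n + 1).factorial : ℚ)) := by
        rw [Nat.factorial_succ, show 2 * (n + 1) = (2 * n + 1) + 1 by ring, Nat.factorial_succ]
        push_cast; ring
      have ih' := ihn (k + 1)
      rw [show 2 * n + 1 + (k + 1) = 2 * (n + 1) + k by ring] at ih'
      rw [show 2 * n + 1 + 1 = 2 * (n + 1) by ring,
        show 2 * (n + 1) + k + 1 = 2 * (n + 1) + 1 + k by ring, ea, ← ih'] at bot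
      rw [← add_assoc, top, ← ihk, Todd]
      split_ifs with hpar
      · have hz := powDiff_symm (n + 1) (2 * (n + 1) + k) (by grind)
        rw [bot, hz, hf]
        push_cast
        ring
      · have hz := powDiff_symm (n + 1) (2 * (n + 1) + 1 + k) (by grind)
        rw [hz]
        push_cast
        ring

/-- For all integers `n ≥ 1` and `k ≥ 1`,
`Todd(n,k) = (1/(2n-1)!) · Σ_{i=0}^{2n-1} (-1)^{2n-1-i} C(2n-1,i) (i-n+1)^{2n+k-2}`. -/
theorem Todd_eq_central_diff (n k : ℕ) (hn : 1 ≤ n) (hk : 1 ≤ k) :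
    (Todd n k : ℚ) = (1 / (Nat.factorial (2 * n - 1) : ℚ)) *
      ∑ i ∈ Finset.range (2 * n),
        (-1 : ℚ) ^ (2 * n - 1 - i) * (Nat.choose (2 * n - 1) i : ℚ)
          * ((i : ℚ) - (n : ℚ) + 1) ^ (2 * n + k - 2) := by
  obtain ⟨n, rfl⟩ := Nat.exists_eq_add_of_le' hn
  obtain ⟨k, rfl⟩ := Nat.exists_eq_add_of_le' hk
  have h := todd_mul_factorial n k
  have e1 : 2 * (n + 1) - 1 = 2 * n + 1 := by omega
  have e2 : 2 * (n + 1) + (k + 1) - 2 = 2 * n + 1 + k := by omega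
  have e3 : ∀ i : ℕ, (i : ℚ) - ((n + 1 : ℕ) : ℚ) + 1 = -n + i := by
    intro i; push_cast; ring
  have hf : ((2 * n + 1).factorial : ℚ) ≠ 0 := by positivity
  simp only [e1, e2, e3]
  rw [one_div, eq_inv_mul_iff_mul_eq₀ hf, h]
  rfl
end

section
/- For all integers n ≥ 1 and k ≥ 1, Todd(n,k) = Σ_{j=0}^{2n+k-2} C(2n+k-2, j) · (1-n)^{2n+k-2-j} · S(j, 2n-1), where S denotes the Stirling numbers of the second kind. -/
/-!
Write `F(m,c,N) = ∑_j C(N,j) c^(N-j) S(j,m)`, whose exponential generating function in `N` is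
`e^(cx) (e^x - 1)^m / m!`. The claim is `Todd(n,k) = F(2n-1, 1-n, 2n+k-2)`.

Two identities carry the proof: the derivative of the generating function gives
`F(m,c,N+1) = (m+c) F(m,c,N) + F(m-1,c,N)` (`shifted_succ_succ`), and multiplying it by `e^x - 1`
gives `F(m,c+1,N) - F(m,c,N) = (m+1) F(m+1,c,N)` (`shifted_add_one`).
The first one reads `F(2n-1,1-n,N+1) = n F(2n-1,1-n,N) + F(2(n-1),-(n-1),N)`, so it remains to
identify the last term, with generating function `(2 sinh (x/2))^(2(n-1)) / (2(n-1))!`. This is an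
even function, so the term vanishes for odd `N` (`shifted_central_odd`); for even `N = M + 1`, the
two identities together with this vanishing at `M` show that it is `F(2n-3,2-n,M)`, the value
corresponding to `Todd(n-1,k)`.
-/

open Finset

/-- Stirling numbers of the second kind:
`S(0,0) = 1`, `S(n,0) = S(0,k) = 0` for `n,k ≥ 1`, `S(n+1,k) = k·S(n,k) + S(n,k-1)`. -/
def stirling2 : ℕ → ℕ → ℕ
  | 0, 0 => 1
  | 0, _ + 1 => 0
  | _ + 1, 0 => 0
  | n + 1, k + 1 => (k + 1) * stirling2 n (k + 1) + stirling2 n k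

/-- The sum `F(m,c,N) = ∑_{j ≤ N} C(N,j) c^(N-j) S(j,m)`, i.e. `N!` times the coefficient of `x^N`
in `e^(cx) (e^x - 1)^m / m!`. -/
def shifted (m : ℕ) (c : ℤ) (N : ℕ) : ℤ :=
  ∑ j ∈ range (N + 1), (N.choose j : ℤ) * c ^ (N - j) * (stirling2 j m : ℤ)

/-- Pascal's rule for binomial transforms. -/
lemma binomial_sum_succ (a : ℕ → ℤ) (c : ℤ) (N : ℕ) :
    ∑ j ∈ range (N + 2), ((N + 1).choose j : ℤ) * c ^ (N + 1 - j) * a j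
      = c * ∑ j ∈ range (N + 1), (N.choose j : ℤ) * c ^ (N - j) * a j
        + ∑ j ∈ range (N + 1), (N.choose j : ℤ) * c ^ (N - j) * a (j + 1) := by
  have h : c * ∑ j ∈ range (N + 1), (N.choose j : ℤ) * c ^ (N - j) * a j
      = ∑ j ∈ range (N + 2), (N.choose j : ℤ) * c ^ (N + 1 - j) * a j := by
    rw [sum_range_succ _ (N + 1), mul_sum]
    simp only [Nat.choose_succ_self, Nat.cast_zero, zero_mul, add_zero]
    refine sum_congr rfl fun j hj => ?_
    have hj' : j ≤ N := by simpa [Nat.lt_succ_iff] using hj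
    rw [Nat.succ_sub hj', pow_succ]
    ring
  rw [h, sum_range_succ', sum_range_succ' _ (N + 1)]
  simp only [Nat.choose_succ_succ, Nat.choose_zero_right, Nat.add_sub_add_right, Nat.cast_add,
    add_mul, sum_add_distrib]
  ring

lemma shifted_zero (m : ℕ) (c : ℤ) : shifted m c 0 = if m = 0 then 1 else 0 := by
  cases m <;> simp [shifted, stirling2]

lemma shifted_zero_succ (c : ℤ) (N : ℕ) : shifted 0 c (N + 1) = c * shifted 0 c N := by
  simp [shifted, binomial_sum_succ, stirling2]

lemma shifted_succ_succ (m : ℕ) (c : ℤ) (N : ℕ) :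
    shifted (m + 1) c (N + 1) = (m + 1 + c) * shifted (m + 1) c N + shifted m c N := by
  simp only [shifted]
  rw [binomial_sum_succ, add_comm ((m : ℤ) + 1) c, add_mul, add_assoc]
  congr 1
  rw [mul_sum, ← sum_add_distrib]
  refine sum_congr rfl fun j _ => ?_
  simp only [stirling2]
  push_cast
  ring

lemma shifted_add_one (m : ℕ) (c : ℤ) (N : ℕ) :
    shifted m (c + 1) N = shifted m c N + (m + 1) * shifted (m + 1) c N := by
  induction N generalizing m with
  | zero => simp [shifted_zero]
  | succ N ih =>
    cases m with
    | zero =>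
      rw [shifted_zero_succ, shifted_zero_succ, shifted_succ_succ, ih]
      push_cast
      ring
    | succ m =>
      have h1 := ih m
      have h2 := ih (m + 1)
      rw [shifted_succ_succ, shifted_succ_succ, shifted_succ_succ (m + 1)]
      push_cast at *
      linear_combination h1 + (m + 1 + (c + 1)) * h2

lemma shifted_eq_zero_of_lt (m : ℕ) (c : ℤ) (N : ℕ) (h : N < m) : shifted m c N = 0 := by
  induction N generalizing m with
  | zero => simp [shifted_zero, h.ne']
  | succ N ih =>
    obtain ⟨m, rfl⟩ : ∃ p, m = p + 1 := ⟨m - 1, by omega⟩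
    rw [shifted_succ_succ, ih _ (by omega), ih _ (by omega)]
    simp

lemma shifted_self (m : ℕ) (c : ℤ) : shifted m c m = 1 := by
  induction m with
  | zero => simp [shifted_zero]
  | succ m ih => rw [shifted_succ_succ, ih, shifted_eq_zero_of_lt _ _ _ (by omega)]; simp

/-- `y = (2 sinh (x/2))^(2m+2) / (2m+2)!` satisfies
`y'' = (m+1)² y + (2 sinh (x/2))^(2m) / (2m)!`. -/
lemma shifted_central_add_two (m N : ℕ) :
    shifted (2 * m + 2) (-(m + 1)) (N + 2)
      = (m + 1) ^ 2 * shifted (2 * m + 2) (-(m + 1)) N + shifted (2 * m) (-m) N := by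
  have e : -((m : ℤ) + 1) + 1 = -m := by ring
  have h1 := shifted_succ_succ (2 * m + 1) (-(m + 1)) (N + 1)
  have h2 := shifted_succ_succ (2 * m + 1) (-(m + 1)) N
  have h3 := shifted_add_one (2 * m + 1) (-(m + 1)) N
  have h4 := shifted_add_one (2 * m + 1) (-(m + 1)) (N + 1)
  have h5 := shifted_succ_succ (2 * m) (-m) N
  rw [e] at h3 h4
  push_cast at *
  linear_combination h1 - h4 + h5 + (m + 1) * h3 - (m + 1) * h2

/-- The even function `(2 sinh (x/2))^(2m)` has no odd coefficients. -/
lemma shifted_central_odd (m t : ℕ) : shifted (2 * m) (-m) (2 * t + 1) = 0 := by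
  induction t generalizing m with
  | zero =>
    cases m with
    | zero => simp [shifted_zero_succ]
    | succ m => exact shifted_eq_zero_of_lt _ _ _ (by omega)
  | succ t ih =>
    cases m with
    | zero => simp [shifted_zero_succ]
    | succ m =>
      have h := shifted_central_add_two m (2 * t + 1)
      have h1 := ih (m + 1)
      rw [ih m] at h
      push_cast [Nat.mul_succ] at *
      rw [h1] at h
      simpa using h

lemma shifted_one_zero (N : ℕ) : shifted 1 0 (N + 1) = 1 := by
  induction N with
  | zero => exact shifted_self 1 0
  | succ N ih =>
    rw [shifted_succ_succ, ih, shifted_zero_succ]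
    simp

lemma Todd_eq_shifted (p q : ℕ) : Todd (p + 1) (q + 1) = shifted (2 * p + 1) (-p) (2 * p + q + 1) := by
  induction p generalizing q with
  | zero => simp [Todd, shifted_one_zero]
  | succ p ihp =>
    induction q with
    | zero => rw [Todd, add_zero, shifted_self]
    | succ q ihq =>
      have hrec := shifted_succ_succ (2 * p + 2) (-(p + 1)) (2 * (p + 1) + q + 1)
      rw [Todd, ihq, ihp]
      push_cast [Nat.mul_succ] at *
      split_ifs with hq
      · -- The central coefficient at the even index `2p + q + 3` reduces to the one at the odd
        -- index `2p + q + 2`, which vanishes.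
        obtain ⟨t, ht⟩ : ∃ t, q = 2 * t + 1 := ⟨q / 2, by omega⟩
        have hz := shifted_central_odd (p + 1) (p + t + 1)
        have hs := shifted_succ_succ (2 * p + 1) (-(p + 1)) (2 * p + q + 2)
        have ha := shifted_add_one (2 * p + 1) (-(p + 1)) (2 * p + q + 2)
        have e : -((p : ℤ) + 1) + 1 = -p := by ring
        rw [e] at ha
        rw [show 2 * (p + t + 1) + 1 = 2 * p + q + 2 by omega] at hz
        push_cast [Nat.mul_succ] at *
        rw [hz] at hs ha
        rw [show 2 * p + 2 + (q + 1) + 1 = 2 * p + 2 + q + 1 + 1 by ring,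
          show 2 * p + (q + 1) + 1 = 2 * p + q + 2 by ring]
        rw [show 2 * p + q + 2 + 1 = 2 * p + 2 + q + 1 by ring] at hs
        linear_combination ha - hs - hrec
      · obtain ⟨t, ht⟩ : ∃ t, q = 2 * t := ⟨q / 2, by omega⟩
        have hz := shifted_central_odd (p + 1) (p + t + 1)
        rw [show 2 * (p + t + 1) + 1 = 2 * p + 2 + q + 1 by omega] at hz
        push_cast [Nat.mul_succ] at *
        rw [show 2 * p + 2 + (q + 1) + 1 = 2 * p + 2 + q + 1 + 1 by ring]
        linear_combination -hrec - hz

/-- For all integers `n ≥ 1` and `k ≥ 1`,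
`Todd(n,k) = Σ_{j=0}^{2n+k-2} C(2n+k-2,j) (1-n)^{2n+k-2-j} S(j, 2n-1)`,
where `S` denotes the Stirling numbers of the second kind. -/
theorem Todd_eq_stirling_sum (n k : ℕ) (hn : 1 ≤ n) (hk : 1 ≤ k) :
    Todd n k = ∑ j ∈ Finset.range (2 * n + k - 1),
      (Nat.choose (2 * n + k - 2) j : ℤ) * (1 - (n : ℤ)) ^ (2 * n + k - 2 - j)
        * (stirling2 j (2 * n - 1) : ℤ) := by
  obtain ⟨p, rfl⟩ : ∃ p, n = p + 1 := ⟨n - 1, by omega⟩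
  obtain ⟨q, rfl⟩ : ∃ q, k = q + 1 := ⟨k - 1, by omega⟩
  rw [Todd_eq_shifted, shifted]
  rw [show 2 * (p + 1) + (q + 1) - 1 = 2 * p + q + 1 + 1 by omega,
    show 2 * (p + 1) + (q + 1) - 2 = 2 * p + q + 1 by omega,
    show 2 * (p + 1) - 1 = 2 * p + 1 by omega,
    show 1 - ((p + 1 : ℕ) : ℤ) = -p by push_cast; ring]
end

section
/- For every integer k ≥ 1, Todd(2,k) = ⌊2^{k+1}/3⌋ (so row n = 2 of the array Todd is the Lichtenberg sequence OEIS A000975). -/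
open Finset

/-- Clearing the floor: `3 · Todd(2,k)` falls short of `2 ^ (k + 1)` by the residue of
`2 ^ (k + 1)` modulo `3`, which is `1` for odd `k` and `2` for even `k`. -/
theorem three_mul_Todd_two (k : ℕ) :
    3 * Todd 2 (k + 1) + (if (k + 1) % 2 = 1 then 1 else 2) = 2 ^ (k + 2) := by
  induction k with
  | zero => simp [Todd]
  | succ k ih =>
    have hrec : Todd 2 (k + 2) =
        if (k + 2) % 2 = 1 then 2 * Todd 2 (k + 1) + 1 else 2 * Todd 2 (k + 1) := by
      rw [Todd]
      simp [Todd]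
    rw [show k + 1 + 1 = k + 2 from rfl, hrec, show k + 1 + 2 = k + 2 + 1 from rfl, pow_succ, ← ih]
    split_ifs <;> omega

/-- For every integer `k ≥ 1`, `Todd(2,k) = ⌊2^{k+1}/3⌋`
(row `n = 2` of `Todd` is the Lichtenberg sequence OEIS A000975). -/
theorem Todd_row_two (k : ℕ) (hk : 1 ≤ k) :
    Todd 2 k = (2 ^ (k + 1) : ℤ) / 3 := by
  obtain ⟨j, rfl⟩ := Nat.exists_eq_add_of_le' hk
  have h := three_mul_Todd_two j
  rw [show j + 1 + 1 = j + 2 from rfl]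
  split_ifs at h <;> omega
end

section
/- For every integer m ≥ 1, 3 · Todd(2, 2m-1) = 4^m - 1 (so the odd-indexed entries of row n = 2 of Todd form the sequence (4^m - 1)/3, OEIS A002450). -/
/-! Two steps along row `2` turn the odd-indexed entry `t` into `4 * t + 1`: the even step doubles
it, and the odd step doubles again and adds `Todd 1 _ = 1`. Since `3 * (4 * t + 1) + 1 = 4 * (3 * t + 1)`,
the quantity `3 * t + 1` is multiplied by `4` each time, starting from `4` at `Todd 2 1 = 1`. -/

open Finset

theorem Todd_two_odd_step (j : ℕ) : Todd 2 (2 * j + 3) = 4 * Todd 2 (2 * j + 1) + 1 := by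
  have hodd : Todd 2 (2 * j + 3) = 2 * Todd 2 (2 * j + 2) + Todd 1 (2 * j + 3) := by
    rw [Todd.eq_def 2 (2 * j + 3)]
    simp [show (2 * j + 1 + 2) % 2 = 1 by omega]
  have heven : Todd 2 (2 * j + 2) = 2 * Todd 2 (2 * j + 1) := by
    rw [Todd.eq_def 2 (2 * j + 2)]
    simp
  have hone : Todd 1 (2 * j + 3) = 1 := by
    rw [Todd]
  rw [hodd, heven, hone]
  ring

/-- For every integer `m ≥ 1`, `3 · Todd(2, 2m-1) = 4^m - 1`
(the odd-indexed entries of row `n = 2` of `Todd` form `(4^m - 1)/3`, OEIS A002450). -/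
theorem Todd_row_two_odd (m : ℕ) (hm : 1 ≤ m) :
    3 * Todd 2 (2 * m - 1) = 4 ^ m - 1 := by
  obtain ⟨j, rfl⟩ : ∃ j, m = j + 1 := ⟨m - 1, by omega⟩
  rw [show 2 * (j + 1) - 1 = 2 * j + 1 by omega]
  clear hm
  induction j with
  | zero => norm_num [Todd]
  | succ j ih =>
    rw [show 2 * (j + 1) + 1 = 2 * j + 3 by ring, Todd_two_odd_step, pow_succ]
    linarith
end

section
/- For every integer n ≥ 1, 6 · Todd(n,3) = n(n+1)(2n+1) (so column k = 3 of the array Todd consists of the square pyramidal numbers, OEIS A000330). -/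
/-!
Column two is `Todd(n,2) = n` for `n ≥ 2`, so the recurrence at the odd index `k = 3` reads
`Todd(n,3) = n ^ 2 + Todd(n-1,3)`. With `Todd(1,3) = 1`, column three is the sum of the first `n`
squares, and its closed form follows by induction on `n`.
-/

open Finset

/-- Column two: the recurrence at the even index `k = 2` has no carry term. -/
theorem Todd_succ_succ_two (m : ℕ) : Todd (m + 2) 2 = m + 2 := by
  rw [Todd, Todd]
  simp

theorem Todd_succ_succ_three (m : ℕ) :
    Todd (m + 2) 3 = ((m : ℤ) + 2) ^ 2 + Todd (m + 1) 3 := by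
  rw [Todd]
  simp [Todd_succ_succ_two, sq]

/-- For every integer `n ≥ 1`, `6 · Todd(n,3) = n(n+1)(2n+1)`
(column `k = 3` of `Todd` consists of the square pyramidal numbers, OEIS A000330). -/
theorem Todd_column_three (n : ℕ) (hn : 1 ≤ n) :
    6 * Todd n 3 = (n : ℤ) * ((n : ℤ) + 1) * (2 * (n : ℤ) + 1) := by
  induction n, hn using Nat.le_induction with
  | base => simp [Todd]
  | succ n hn ih =>
    obtain ⟨m, rfl⟩ := Nat.exists_eq_add_of_le' hn
    rw [show m + 1 + 1 = m + 2 from rfl, Todd_succ_succ_three, mul_add, ih]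
    push_cast
    ring
end
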